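/- For every n ≥ 4, the number of words L ∈ 𝓛_n with exactly one P1-match and exactly one P6-match (equivalently, paths with exactly one east step below the subdiagonal y = x − 1 and exactly one north step above the superdiagonal y = x + 1) equals (n−2)·(n−3)·2^{n−4}. -/

import Mathlib

/-!
Words over the alphabet {E, N} are encoded as `List Bool`,
with `true` representing an east step `E` and `false` a north step `N`.
The word `w = w_1 ⋯ w_{2n}` corresponds to the lattice path from `(0,0)` to
`(n,n)` whose `j`-th step is east if `w_j = true` and north if `w_j = false`.
-/

/-- `w ∈ 𝓛_n`: the word `w` has exactly `n` `E`'s and `n` `N`'s. -/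
def memL (n : ℕ) (w : List Bool) : Prop :=
  w.count true = n ∧ w.count false = n

/-- The (0-indexed, increasing) list of positions at which the letter `b` occurs in `w`. -/
def occPos (w : List Bool) (b : Bool) : List ℕ :=
  (List.range w.length).filter (fun j => w.getD j (!b) == b)

/-- `ps_w({i, i+1})` (with `i` 1-indexed): the length-4 word obtained from `w` by
deleting, for each `j ∉ {i, i+1}`, the `j`-th occurrence of `E` and the `j`-th
occurrence of `N` (counted from left to right); i.e. the word formed by the
`i`-th and `(i+1)`-th occurrences of `E` and of `N`, read in their original order. -/
def pairedSubword (w : List Bool) (i : ℕ) : List Bool :=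
  let keep : List ℕ := [(occPos w true).getD (i-1) 0, (occPos w true).getD i 0,
                        (occPos w false).getD (i-1) 0, (occPos w false).getD i 0]
  ((List.range w.length).filter (fun j => keep.contains j)).map (fun j => w.getD j true)

/-- `P`-mch(w): the number of paired steps `i` with `1 ≤ i ≤ n-1` at which the
paired pattern `P` matches in `w ∈ 𝓛_n`. -/
def pmch (n : ℕ) (P w : List Bool) : ℕ :=
  ((Finset.Icc 1 (n-1)).filter (fun i => pairedSubword w i = P)).card

def P1 : List Bool := [true, true, false, false]   -- EENN
def P2 : List Bool := [true, false, true, false]   -- ENEN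
def P3 : List Bool := [false, true, true, false]   -- NEEN
def P4 : List Bool := [true, false, false, true]   -- ENNE
def P5 : List Bool := [false, true, false, true]   -- NENE
def P6 : List Bool := [false, false, true, true]   -- NNEE

/-!
Writing `b` for a letter and `!b` for the other one, `bb(!b)(!b)` matches at paired step `i` exactly
when the `(i + 1)`-st `b` precedes the `i`-th `!b`, that is, when this `b`-step starts strictly on
the `b`-side of the diagonal. So matches are *outer steps*, which can be counted one step at a time.

Let `N(m, d, a, c)` be the number of words of length `m` in which `b` finally leads by `d`, with `a`
outer `b`-steps and `c` outer `!b`-steps. Removing the last two letters gives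
`N(m + 2, 0, a, c) = 2 N(m, 0, a, c) + N(m, 2, a, c) + N(m, -2, a, c)`. A lead of `d` takes at least
`d - 1` outer steps, so a word with lead 2 and a single outer `b`-step ends in `bb`, preceded by a
word with lead 0: `N(m + 2, 2, 1, c) = N(m, 0, 0, c)`. Solving these recursions for
`(a, c) = (0, 0), (0, 1), (1, 1)` in turn gives the count.
-/

/-- The signed lead of the letter `b` in a word: for `b = true` the endpoint of the path lies on
the line `y = x - excess b w`. -/
def excess (b : Bool) (w : List Bool) : ℤ :=
  w.count b - w.count (!b)

/-- The number of `b`-steps of a path that start strictly on the `b`-side of the diagonal: the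
east steps below `y = x - 1` for `b = true`, the north steps above `y = x + 1` for `b = false`. -/
def outerSteps (b : Bool) (w : List Bool) : ℕ :=
  {j ∈ Finset.range w.length | w[j]? = some b ∧ 0 < excess b (w.take j)}.card

theorem idxOfNth_lt_iff_lt_countBefore {α : Type*} [BEq α] {x : α} {l : List α} {k j : ℕ}
    (hj : j ≤ l.length) : l.idxOfNth x k < j ↔ k < l.countBefore x j := by
  induction l generalizing k j with
  | nil => simp [Nat.le_zero.1 hj]
  | cons y l ih =>
    have hne := ih (k := k) (j := j - 1)
    have heq := ih (k := k - 1) (j := j - 1)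
    grind

theorem occPos_eq_idxsOf (w : List Bool) (b : Bool) : occPos w b = w.idxsOf b := by
  refine List.SortedLT.eq_of_mem_iff (List.pairwise_lt_range.filter _).sortedLT
    List.pairwise_idxsOf.sortedLT fun j => ?_
  grind [occPos]

theorem getD_occPos {w : List Bool} {b : Bool} {i : ℕ} (hi : i < w.count b) :
    (occPos w b).getD i 0 = w.idxOfNth b i := by
  rw [occPos_eq_idxsOf, List.getD_eq_getElem _ _ (by simpa using hi),
    List.getElem_idxOf_eq_idxOfNth]

theorem pairedSubword_eq_map_filter {b : Bool} {w : List Bool} {i : ℕ}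
    (hb : i + 1 < w.count b) (hb' : i + 1 < w.count (!b)) :
    pairedSubword w (i + 1) =
      ((List.range w.length).filter (· ∈ [w.idxOfNth b i, w.idxOfNth b (i + 1),
        w.idxOfNth (!b) i, w.idxOfNth (!b) (i + 1)])).map (w.getD · true) := by
  rw [← getD_occPos hb, ← getD_occPos hb', ← getD_occPos (Nat.lt_of_succ_lt hb),
    ← getD_occPos (Nat.lt_of_succ_lt hb'), pairedSubword]
  refine congrArg _ (List.filter_congr fun j _ => ?_)
  cases b <;> grind

theorem filter_mem_range_of_sortedLT {l : List ℕ} {m : ℕ} (hl : l.SortedLT) (hm : ∀ j ∈ l, j < m) :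
    (List.range m).filter (· ∈ l) = l :=
  List.SortedLT.eq_of_mem_iff (List.pairwise_lt_range.filter _).sortedLT hl (by grind)

theorem lt_of_pairwise_map {α β : Type*} [LinearOrder α] {f : α → β} {l : List α} {x y : β}
    (hl : l.SortedLT) (h : (l.map f).Pairwise fun u v => ¬(u = y ∧ v = x)) (hxy : x ≠ y)
    {q r : α} (hq : q ∈ l) (hr : r ∈ l) (hfq : f q = x) (hfr : f r = y) : q < r := by
  obtain ⟨a, ha, rfl⟩ := List.getElem_of_mem hq
  obtain ⟨c, hc, rfl⟩ := List.getElem_of_mem hr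
  rw [List.pairwise_map, List.pairwise_iff_getElem] at h
  rcases lt_trichotomy a c with hac | rfl | hca
  · exact List.pairwise_iff_getElem.1 hl.pairwise a c ha hc hac
  · exact absurd (hfq.symm.trans hfr) hxy
  · exact absurd ⟨hfr, hfq⟩ (h c a hc ha hca)

theorem pairedSubword_eq_iff_idxOfNth_lt {b : Bool} {w : List Bool} {i : ℕ}
    (hb : i + 1 < w.count b) (hb' : i + 1 < w.count (!b)) :
    pairedSubword w (i + 1) = [b, b, !b, !b] ↔ w.idxOfNth b (i + 1) < w.idxOfNth (!b) i := by
  have letter {c : Bool} {k : ℕ} (hk : k < w.count c) :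
      w.idxOfNth c k < w.length ∧ w.getD (w.idxOfNth c k) true = c := by
    have := List.idxOfNth_lt_length_of_lt_count hk
    grind
  have step {c : Bool} (hc : i + 1 < w.count c) : w.idxOfNth c i < w.idxOfNth c (i + 1) :=
    List.idxOfNth_lt_idxOfNth_iff.2 ⟨by omega, by omega⟩
  have ⟨hlt, hletter⟩ := letter hb
  have ⟨hlt', hletter'⟩ := letter hb'
  have ⟨hlt₀, hletter₀⟩ := letter (Nat.lt_of_succ_lt hb)
  have ⟨hlt₀', hletter₀'⟩ := letter (Nat.lt_of_succ_lt hb')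
  rw [pairedSubword_eq_map_filter hb hb']
  constructor <;> intro h
  · exact lt_of_pairwise_map (x := b) (y := !b) (List.pairwise_lt_range.filter _).sortedLT
      (by rw [h]; simp) (by simp) (by grind) (by grind) (by grind) (by grind)
  · rw [filter_mem_range_of_sortedLT]
    · grind
    · have hstep := step hb
      have hstep' := step hb'
      simp only [List.sortedLT_iff_pairwise, List.pairwise_cons]
      grind
    · grind

theorem idxOfNth_lt_idxOfNth_not_iff {b : Bool} {w : List Bool} {i : ℕ}
    (hb : i + 1 < w.count b) (hb' : i < w.count (!b)) :
    w.idxOfNth b (i + 1) < w.idxOfNth (!b) i ↔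
      0 < excess b (w.take (w.idxOfNth b (i + 1))) := by
  have hlt := List.idxOfNth_lt_length_of_lt_count hb
  have hlt' := List.idxOfNth_lt_length_of_lt_count hb'
  have hne : w.idxOfNth (!b) i ≠ w.idxOfNth b (i + 1) := by
    intro h
    have hget : w[w.idxOfNth b (i + 1)] = b := List.getElem_idxOfNth_eq
    have hget' : w[w.idxOfNth (!b) i] = !b := List.getElem_idxOfNth_eq
    grind
  have hbefore := idxOfNth_lt_iff_lt_countBefore (x := !b) (k := i) hlt.le
  have hcount := List.countBefore_idxOfNth_of_lt_count hb
  simp only [excess, ← List.countBefore_eq_count_take]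
  omega

theorem outerSteps_eq_card_filter_idxOfNth (b : Bool) (w : List Bool) :
    outerSteps b w =
      {i ∈ Finset.range (w.count b) | 0 < excess b (w.take (w.idxOfNth b i))}.card := by
  have hidx {i : ℕ} : i < w.count b → w.idxOfNth b i < w.length :=
    List.idxOfNth_lt_length_of_lt_count
  refine Finset.card_nbij' (w.countBefore b) (w.idxOfNth b) ?_ ?_ ?_ ?_ <;>
    simp only [Set.MapsTo, Set.LeftInvOn, Set.RightInvOn, Finset.mem_coe, Finset.mem_filter,
      Finset.mem_range] <;>
    grind

theorem pmch_eq_outerSteps {n : ℕ} {b : Bool} {w : List Bool} (hb : w.count b = n)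
    (hb' : w.count (!b) = n) : pmch n [b, b, !b, !b] w = outerSteps b w := by
  rw [outerSteps_eq_card_filter_idxOfNth, pmch]
  congr 1
  ext i
  rcases i with _ | i
  · have hfirst : 0 < w.count b → w.countBefore b (w.idxOfNth b 0) = 0 :=
      List.countBefore_idxOfNth_of_lt_count
    simp only [Finset.mem_filter, Finset.mem_Icc, Finset.mem_range, excess,
      ← List.countBefore_eq_count_take]
    omega
  · simp only [Finset.mem_filter, Finset.mem_Icc, Finset.mem_range]
    have hrange : (1 ≤ i + 1 ∧ i + 1 ≤ n - 1) ↔ i + 1 < w.count b := by omega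
    rw [hrange]
    refine and_congr_right fun hi => ?_
    rw [pairedSubword_eq_iff_idxOfNth_lt hi (by omega),
      idxOfNth_lt_idxOfNth_not_iff hi (by omega)]

theorem excess_not (b : Bool) (w : List Bool) : excess (!b) w = -excess b w := by
  simp [excess]

theorem excess_concat_self (b : Bool) (w : List Bool) :
    excess b (w ++ [b]) = excess b w + 1 := by
  simp only [excess, List.count_append, List.count_singleton_self, List.count_singleton]
  grind

theorem excess_concat_not (b : Bool) (w : List Bool) :
    excess b (w ++ [!b]) = excess b w - 1 := by
  rw [← neg_inj, ← excess_not, excess_concat_self, excess_not]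
  ring

theorem outerSteps_concat (b x : Bool) (w : List Bool) :
    outerSteps b (w ++ [x]) = outerSteps b w + if x = b ∧ 0 < excess b w then 1 else 0 := by
  have hold : {j ∈ Finset.range w.length |
        (w ++ [x])[j]? = some b ∧ 0 < excess b ((w ++ [x]).take j)} =
      {j ∈ Finset.range w.length | w[j]? = some b ∧ 0 < excess b (w.take j)} :=
    Finset.filter_congr fun j hj => by grind
  rw [outerSteps, List.length_append, List.length_singleton, Finset.range_add_one,
    Finset.filter_insert, hold, outerSteps]
  simp only [List.getElem?_concat_length, List.take_left', Option.some.injEq]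
  split_ifs <;> simp

theorem excess_le_outerSteps_add_one (b : Bool) (w : List Bool) :
    excess b w ≤ outerSteps b w + 1 := by
  induction w using List.reverseRecOn with
  | nil => simp [excess, outerSteps]
  | append_singleton w x ih =>
    rw [outerSteps_concat]
    rcases Bool.eq_or_eq_not x b with rfl | rfl
    · rw [excess_concat_self]; split_ifs <;> grind
    · rw [excess_concat_not]; split_ifs <;> grind

/-- The words of length `m` in which the letter `b` finally leads by `d`, with `a` outer steps on
the `b`-side of the diagonal and `c` outer steps on the other side. -/
def pathsTo (b : Bool) (m : ℕ) (d : ℤ) (a c : ℕ) : Set (List Bool) :=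
  {w | w.length = m ∧ excess b w = d ∧ outerSteps b w = a ∧ outerSteps (!b) w = c}

theorem pathsTo_not (b : Bool) (m : ℕ) (d : ℤ) (a c : ℕ) :
    pathsTo (!b) m (-d) c a = pathsTo b m d a c := by
  ext w
  simp only [pathsTo, excess_not, Bool.not_not, neg_inj, Set.mem_ofPred_eq]
  tauto

theorem finite_pathsTo (b : Bool) (m : ℕ) (d : ℤ) (a c : ℕ) : (pathsTo b m d a c).Finite :=
  (List.finite_length_eq Bool m).subset fun _ hw => hw.1

theorem pathsTo_eq_empty {b : Bool} {m : ℕ} {d : ℤ} {a c : ℕ} (h : (a : ℤ) + 1 < d) :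
    pathsTo b m d a c = ∅ := by
  refine Set.eq_empty_of_forall_notMem fun w ⟨_, hd, ha, _⟩ => ?_
  have := excess_le_outerSteps_add_one b w
  omega

theorem pathsTo_zero_length (b : Bool) (d : ℤ) (a c : ℕ) :
    pathsTo b 0 d a c = if d = 0 ∧ a = 0 ∧ c = 0 then {[]} else ∅ := by
  ext w
  rcases w with _ | ⟨x, w⟩
  · simp [pathsTo, excess, outerSteps, eq_comm]
  · split_ifs <;> simp [pathsTo]

theorem mem_pathsTo_concat_self {b : Bool} {m : ℕ} {d : ℤ} {a c : ℕ} {w : List Bool} :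
    w ++ [b] ∈ pathsTo b (m + 1) d (a + if 1 < d then 1 else 0) c ↔
      w ∈ pathsTo b m (d - 1) a c := by
  simp only [pathsTo, Set.mem_ofPred_eq, List.length_append, List.length_singleton,
    excess_concat_self, outerSteps_concat]
  grind

theorem mem_pathsTo_concat_not {b : Bool} {m : ℕ} {d : ℤ} {a c : ℕ} {w : List Bool} :
    w ++ [!b] ∈ pathsTo b (m + 1) d a (c + if d < -1 then 1 else 0) ↔
      w ∈ pathsTo b m (d + 1) a c := by
  simp only [pathsTo, Set.mem_ofPred_eq, List.length_append, List.length_singleton,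
    excess_concat_not, outerSteps_concat, excess_not]
  grind

-- A last `b` is an outer step iff `1 < d`, a last `!b` iff `d < -1`; adding these steps to the
-- counts on the left-hand side avoids subtracting them on the right.
theorem ncard_pathsTo_succ (b : Bool) (m : ℕ) (d : ℤ) (a c : ℕ) :
    (pathsTo b (m + 1) d (a + if 1 < d then 1 else 0) (c + if d < -1 then 1 else 0)).ncard =
      (pathsTo b m (d - 1) a (c + if d < -1 then 1 else 0)).ncard +
      (pathsTo b m (d + 1) (a + if 1 < d then 1 else 0) c).ncard := by
  set P := pathsTo b (m + 1) d (a + if 1 < d then 1 else 0) (c + if d < -1 then 1 else 0)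
  have hunion : P = (· ++ [b]) '' ((· ++ [b]) ⁻¹' P) ∪ (· ++ [!b]) '' ((· ++ [!b]) ⁻¹' P) := by
    ext w
    simp only [Set.mem_union, Set.mem_image, Set.mem_preimage]
    refine ⟨fun hw => ?_, by rintro (⟨v, hv, rfl⟩ | ⟨v, hv, rfl⟩) <;> exact hv⟩
    obtain ⟨v, x, rfl⟩ := w.eq_nil_or_concat'.resolve_left (by rintro rfl; simp [P, pathsTo] at hw)
    rcases Bool.eq_or_eq_not x b with rfl | rfl
    exacts [.inl ⟨v, hw, rfl⟩, .inr ⟨v, hw, rfl⟩]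
  have hdisj : Disjoint ((· ++ [b]) '' ((· ++ [b]) ⁻¹' P))
      ((· ++ [!b]) '' ((· ++ [!b]) ⁻¹' P)) := by
    rw [Set.disjoint_left]
    rintro _ ⟨v, -, rfl⟩ ⟨v', -, h⟩
    simp at h
  have hfin : P.Finite := finite_pathsTo ..
  rw [hunion, Set.ncard_union_eq hdisj (hfin.subset (Set.image_preimage_subset ..))
      (hfin.subset (Set.image_preimage_subset ..)),
    Set.ncard_image_of_injective _ (List.append_left_injective _),
    Set.ncard_image_of_injective _ (List.append_left_injective _)]
  congr 2 <;> ext w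
  exacts [mem_pathsTo_concat_self, mem_pathsTo_concat_not]

theorem ncard_pathsTo_two_one (b : Bool) (m c : ℕ) :
    (pathsTo b (m + 2) 2 1 c).ncard = (pathsTo b m 0 0 c).ncard := by
  -- Both last steps must be `b`: leads 3 and 2 already force 2 and 1 outer steps, respectively.
  calc (pathsTo b (m + 2) 2 1 c).ncard
    _ = (pathsTo b (m + 1) 1 0 c).ncard := by
      simpa [pathsTo_eq_empty] using ncard_pathsTo_succ b (m + 1) 2 0 c
    _ = (pathsTo b m 0 0 c).ncard := by
      simpa [pathsTo_eq_empty] using ncard_pathsTo_succ b m 1 0 c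

theorem ncard_pathsTo_diag_add_two (b : Bool) (m a c : ℕ) :
    (pathsTo b (m + 2) 0 a c).ncard =
      2 * (pathsTo b m 0 a c).ncard + (pathsTo b m 2 a c).ncard + (pathsTo (!b) m 2 c a).ncard := by
  have hlast : (pathsTo b (m + 2) 0 a c).ncard =
      (pathsTo b (m + 1) (-1) a c).ncard + (pathsTo b (m + 1) 1 a c).ncard := by
    simpa using ncard_pathsTo_succ b (m + 1) 0 a c
  have hone : (pathsTo b (m + 1) 1 a c).ncard =
      (pathsTo b m 0 a c).ncard + (pathsTo b m 2 a c).ncard := by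
    simpa using ncard_pathsTo_succ b m 1 a c
  have hneg_one : (pathsTo b (m + 1) (-1) a c).ncard =
      (pathsTo b m (-2) a c).ncard + (pathsTo b m 0 a c).ncard := by
    simpa using ncard_pathsTo_succ b m (-1) a c
  have hsymm : pathsTo b m (-2) a c = pathsTo (!b) m 2 c a := (pathsTo_not b m (-2) a c).symm
  rw [hlast, hneg_one, hone, hsymm]
  ring

theorem ncard_pathsTo_diag_zero_zero (b : Bool) (k : ℕ) :
    (pathsTo b (2 * k) 0 0 0).ncard = 2 ^ k := by
  induction k with
  | zero => simp [pathsTo_zero_length]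
  | succ k ih =>
    rw [Nat.mul_succ, ncard_pathsTo_diag_add_two, ih]
    simp [pathsTo_eq_empty, pow_succ']

theorem ncard_pathsTo_diag_zero_one (b : Bool) (k : ℕ) :
    (pathsTo b (2 * (k + 1)) 0 0 1).ncard = k * 2 ^ (k - 1) := by
  induction k with
  | zero => simp [ncard_pathsTo_diag_add_two, pathsTo_zero_length]
  | succ k ih =>
    rw [Nat.mul_succ, ncard_pathsTo_diag_add_two, ih, pathsTo_eq_empty (by norm_num),
      Set.ncard_empty, Nat.mul_succ, ncard_pathsTo_two_one, ncard_pathsTo_diag_zero_zero]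
    rcases k with _ | k
    · simp
    · simp only [Nat.add_sub_cancel]
      ring

theorem ncard_pathsTo_diag_one_one (b : Bool) (k : ℕ) :
    (pathsTo b (2 * (k + 2)) 0 1 1).ncard = k * (k - 1) * 2 ^ (k - 2) := by
  induction k with
  | zero =>
    simp [ncard_pathsTo_diag_add_two, ncard_pathsTo_two_one, pathsTo_zero_length]
  | succ k ih =>
    rw [Nat.mul_succ, ncard_pathsTo_diag_add_two, ih, Nat.mul_succ, ncard_pathsTo_two_one,
      ncard_pathsTo_two_one, ncard_pathsTo_diag_zero_one, ncard_pathsTo_diag_zero_one]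
    rcases k with _ | _ | k
    · simp
    · simp
    · simp only [add_assoc, Nat.reduceAdd, Nat.add_one_sub_one, add_tsub_cancel_right,
        Nat.reduceSubDiff]
      ring

theorem memL_iff_excess (n : ℕ) (w : List Bool) :
    memL n w ↔ w.length = 2 * n ∧ excess true w = 0 := by
  have := w.count_true_add_count_false
  simp only [memL, excess, Bool.not_true]
  omega

theorem count_one_P1_one_P6 (n : ℕ) (hn : 4 ≤ n) :
    {w : List Bool | memL n w ∧ pmch n P1 w = 1 ∧ pmch n P6 w = 1}.ncard
      = (n-2) * (n-3) * 2^(n-4) := by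
  have hset : {w : List Bool | memL n w ∧ pmch n P1 w = 1 ∧ pmch n P6 w = 1} =
      pathsTo true (2 * n) 0 1 1 := by
    ext w
    rw [Set.mem_ofPred_eq, pathsTo, Set.mem_ofPred_eq, ← and_assoc (a := _ = _), ← memL_iff_excess]
    refine and_congr_right fun ⟨hE, hN⟩ => ?_
    rw [← pmch_eq_outerSteps (b := true) hE hN, ← pmch_eq_outerSteps (b := !true) hN hE]
    rfl
  obtain ⟨k, rfl⟩ := Nat.exists_eq_add_of_le' hn
  rw [hset]
  exact ncard_pathsTo_diag_one_one true (k + 2)
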